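/- arXiv:2211.04545 — 8 statements merged into one kernel-verified Lean document; each statement's English description precedes it below -/
import Mathlib

section
/- Let n = d·e with d, e ≥ 1, and let τ ∈ S_n be a permutation of Fin n all of whose orbits on Fin n have exactly d elements (i.e., every point of Fin n has minimal period exactly d under τ). Then n times the number of cyclic orders x ∈ CO_n with τ • x = x equals e!·d^e·φ(d), where φ is Euler's totient function. -/
/-- The set of cyclic orders on `Fin n`: the left cosets of the cyclic subgroup
generated by the natural `n`-cycle `i ↦ i + 1` in the symmetric group. -/
abbrev CO (n : ℕ) := Equiv.Perm (Fin n) ⧸ Subgroup.zpowers (finRotate n)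

open Equiv in
theorem perm_pow_fix_iff {n d : ℕ} (σ : Perm (Fin n))
    (h : ∀ i, Function.minimalPeriod (⇑σ) i = d) (i : Fin n) (k : ℕ) :
    (σ ^ k) i = i ↔ d ∣ k := by
  rw [← h i, ← Function.isPeriodicPt_iff_minimalPeriod_dvd, Function.IsPeriodicPt,
    Function.IsFixedPt, Equiv.Perm.iterate_eq_pow]

open Equiv in
theorem cycleType_of_free {n d e : ℕ} (hd : 2 ≤ d) (hn : n = d * e) (σ : Perm (Fin n))
    (h : ∀ i, Function.minimalPeriod (⇑σ) i = d) :
    σ.cycleType = Multiset.replicate e d := by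
  have hall : ∀ l ∈ σ.cycleType, l = d := by
    intro l hl
    rw [Perm.cycleType_def, Multiset.mem_map] at hl
    obtain ⟨c, hc, rfl⟩ := hl
    have hc' : c ∈ σ.cycleFactorsFinset := hc
    have hcyc := (Perm.mem_cycleFactorsFinset_iff.1 hc').1
    obtain ⟨x, hx, -⟩ := id hcyc
    have hceq : c = σ.cycleOf x :=
      Perm.cycle_is_cycleOf (Perm.mem_support.2 hx) hc'
    have hp : ∀ k : ℕ, (c ^ k) x = (σ ^ k) x := by
      intro k; rw [hceq, Perm.cycleOf_pow_apply_self]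
    simp only [Function.comp]
    rw [← hcyc.orderOf]
    apply Nat.dvd_antisymm
    · apply orderOf_dvd_of_pow_eq_one
      rw [hcyc.pow_eq_one_iff]
      exact ⟨x, hx, by rw [hp, perm_pow_fix_iff σ h]⟩
    · rw [← perm_pow_fix_iff σ h x, ← hp, pow_orderOf_eq_one]; rfl
  have hrep := Multiset.eq_replicate_card.2 hall
  have hsum := σ.sum_cycleType
  have hsupp : σ.support = Finset.univ := by
    ext i
    simp only [Perm.mem_support, Finset.mem_univ, iff_true]
    intro hi
    have := (perm_pow_fix_iff σ h i 1).1 (by simpa using hi)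
    have := Nat.le_of_dvd one_pos this
    omega
  rw [hrep, hsupp, Multiset.sum_replicate, Finset.card_univ, Fintype.card_fin, smul_eq_mul,
    mul_comm] at hsum
  replace hsum := hsum.trans hn
  rw [hrep, Nat.eq_of_mul_eq_mul_left (by omega) hsum]

open Equiv in
theorem eq_one_of_free {n : ℕ} (σ : Perm (Fin n))
    (h : ∀ i, Function.minimalPeriod (⇑σ) i = 1) : σ = 1 := by
  ext i
  have := (perm_pow_fix_iff σ h i 1).2 dvd_rfl
  simp only [pow_one] at this
  simp [this]

open Equiv in
theorem card_centralizer_free {n d e : ℕ} (hd : 1 ≤ d) (he : 1 ≤ e) (hn : n = d * e)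
    (σ : Perm (Fin n)) (h : ∀ i, Function.minimalPeriod (⇑σ) i = d) :
    Nat.card (Subgroup.centralizer {σ}) = e.factorial * d ^ e := by
  rw [Equiv.Perm.nat_card_centralizer]
  rcases hd.eq_or_lt with rfl | hd
  · rw [eq_one_of_free σ h]
    simp [hn]
  · rw [cycleType_of_free hd hn σ h, Multiset.toFinset_replicate, if_neg (by omega)]
    simp [hn, mul_comm]

open Equiv in
theorem isConj_free {n d e : ℕ} (hd : 1 ≤ d) (hn : n = d * e)
    (σ τ : Perm (Fin n)) (h : ∀ i, Function.minimalPeriod (⇑σ) i = d)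
    (h' : ∀ i, Function.minimalPeriod (⇑τ) i = d) : IsConj σ τ := by
  rcases hd.eq_or_lt with rfl | hd
  · rw [eq_one_of_free σ h, eq_one_of_free τ h']
  · rw [Perm.isConj_iff_cycleType_eq, cycleType_of_free hd hn σ h, cycleType_of_free hd hn τ h']

open Equiv in
theorem orderOf_rot {n : ℕ} (hn : 1 ≤ n) : orderOf (finRotate n) = n := by
  rcases hn.eq_or_lt with rfl | hn
  · rw [orderOf_eq_one_iff]; exact Subsingleton.elim _ _
  · rw [(isCycle_finRotate_of_le hn).orderOf, support_finRotate_of_le hn]; simp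

open Equiv in
theorem rot_free {n : ℕ} (h : Perm (Fin n)) (hh : h ∈ Subgroup.zpowers (finRotate n))
    (x : Fin n) (hx : h x = x) : h = 1 := by
  rcases Nat.lt_or_ge n 2 with h2 | h2
  · have : Subsingleton (Fin n) := Fin.subsingleton_iff_le_one.2 (by omega)
    exact Subsingleton.elim _ _
  · have hc := isCycle_finRotate_of_le h2
    have hs : ∀ y, finRotate n y ≠ y := fun y => by
      rw [← Perm.mem_support, support_finRotate_of_le h2]; simp
    obtain ⟨j, rfl⟩ := hh
    ext y
    obtain ⟨i, rfl⟩ := hc.exists_zpow_eq (hs x) (hs y)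
    simp only at hx ⊢
    rw [← Perm.mul_apply, ← zpow_add, add_comm, zpow_add, Perm.mul_apply, hx]
    simp

open Equiv in
theorem rot_period {n : ℕ} (h : Perm (Fin n)) (hh : h ∈ Subgroup.zpowers (finRotate n))
    (x : Fin n) : Function.minimalPeriod (⇑h) x = orderOf h := by
  apply Nat.dvd_antisymm
  · rw [← Function.isPeriodicPt_iff_minimalPeriod_dvd, Function.IsPeriodicPt,
      Function.IsFixedPt, Equiv.Perm.iterate_eq_pow, pow_orderOf_eq_one]; rfl
  · apply orderOf_dvd_of_pow_eq_one
    apply rot_free _ (Subgroup.pow_mem _ hh _) x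
    have := Function.isPeriodicPt_minimalPeriod (⇑h) x
    rwa [Function.IsPeriodicPt, Function.IsFixedPt, Equiv.Perm.iterate_eq_pow] at this

theorem card_conj_fiber {G : Type*} [Group G] (t h : G) (c : IsConj h t) :
    Nat.card {g : G // g⁻¹ * t * g = h} = Nat.card (Subgroup.centralizer {t}) := by
  obtain ⟨a, ha⟩ := isConj_iff.1 c
  subst ha
  refine Nat.card_congr ⟨fun g => ⟨g.1 * a⁻¹, ?_⟩, fun z => ⟨z.1 * a, ?_⟩, ?_, ?_⟩
  · rw [Subgroup.mem_centralizer_singleton_iff]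
    have := g.2
    have h2 : (a * h * a⁻¹) * g.1 = g.1 * h := by
      rwa [mul_assoc, inv_mul_eq_iff_eq_mul] at this
    have h3 : (a * h * a⁻¹) * (g.1 * a⁻¹) = g.1 * h * a⁻¹ := by rw [← mul_assoc, h2]
    rw [h3]; group
  · have := Subgroup.mem_centralizer_singleton_iff.1 z.2
    have h2 : (a * h * a⁻¹) * z.1 = z.1 * (a * h * a⁻¹) := this.symm
    calc (z.1 * a)⁻¹ * (a * h * a⁻¹) * (z.1 * a)
        = a⁻¹ * z.1⁻¹ * ((a * h * a⁻¹) * z.1) * a := by group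
      _ = h := by rw [h2]; group
  · intro g; ext; simp
  · intro g; ext; simp

theorem stmt_0 (d e n : ℕ) (hd : 1 ≤ d) (he : 1 ≤ e) (hn : n = d * e)
    (τ : Equiv.Perm (Fin n))
    (hτ : ∀ i : Fin n, Function.minimalPeriod (⇑τ) i = d) :
    n * Nat.card {x : CO n // τ • x = x} = e.factorial * d ^ e * Nat.totient d := by
  classical
  have hn1 : 1 ≤ n := by rw [hn]; exact Nat.mul_pos hd he
  set H := Subgroup.zpowers (finRotate n) with hH
  have hcardH : Nat.card H = n := by rw [Nat.card_zpowers, orderOf_rot hn1]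
  have e1 := Nat.card_congr
    (QuotientGroup.preimageMkEquivSubgroupProdSet H {x : CO n | τ • x = x})
  rw [Nat.card_prod, hcardH] at e1
  have hmem : ∀ g : Equiv.Perm (Fin n),
      g ∈ ((QuotientGroup.mk : _ → CO n) ⁻¹' {x : CO n | τ • x = x}) ↔ g⁻¹ * τ * g ∈ H := by
    intro g
    change ((τ * g : Equiv.Perm (Fin n)) : CO n) = (g : CO n) ↔ _
    rw [eq_comm, QuotientGroup.eq, mul_assoc]
  have hord : ∀ g : Equiv.Perm (Fin n), orderOf (g⁻¹ * τ * g) = orderOf τ := by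
    intro g
    have : g⁻¹ * τ * g = MulAut.conj g⁻¹ τ := by simp
    rw [this, MulEquiv.orderOf_eq]
  have hτo : orderOf τ = d := by
    apply Nat.dvd_antisymm
    · apply orderOf_dvd_of_pow_eq_one
      ext i; rw [(perm_pow_fix_iff τ hτ i d).2 dvd_rfl]; rfl
    · rw [← perm_pow_fix_iff τ hτ ⟨0, hn1⟩, pow_orderOf_eq_one]; rfl
  have e2 : ((QuotientGroup.mk : _ → CO n) ⁻¹' {x : CO n | τ • x = x} : Set _) ≃
      Σ h : {h : H // orderOf h = d}, {g : Equiv.Perm (Fin n) // g⁻¹ * τ * g = h.1.1} :=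
    { toFun := fun g => ⟨⟨⟨g.1⁻¹ * τ * g.1, (hmem g.1).1 g.2⟩, by
          rw [Subgroup.orderOf_mk, hord, hτo]⟩, ⟨g.1, rfl⟩⟩
      invFun := fun p => ⟨p.2.1, (hmem _).2 (by rw [p.2.2]; exact p.1.1.2)⟩
      left_inv := fun g => rfl
      right_inv := by
        rintro ⟨⟨⟨h, h1⟩, h2⟩, ⟨g, h3⟩⟩
        have h4 : g⁻¹ * τ * g = h := h3
        subst h4
        rfl }
  have e3 := Nat.card_congr e2
  rw [Nat.card_sigma] at e3
  have hfib : ∀ h : {h : H // orderOf h = d},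
      Nat.card {g : Equiv.Perm (Fin n) // g⁻¹ * τ * g = h.1.1} = e.factorial * d ^ e := by
    rintro ⟨⟨h, h1⟩, h2⟩
    rw [Subgroup.orderOf_mk] at h2
    rw [card_conj_fiber, card_centralizer_free hd he hn τ hτ]
    exact isConj_free hd hn h τ (fun i => by rw [rot_period h h1, h2]) hτ
  rw [Finset.sum_congr rfl (fun h _ => hfib h), Finset.sum_const, smul_eq_mul, Finset.card_univ,
    Fintype.card_subtype, IsCyclic.card_orderOf_eq_totient
      (by rw [← Nat.card_eq_fintype_card, hcardH, hn]; exact dvd_mul_right _ _), e1] at e3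
  rw [mul_comm (e.factorial * d ^ e)]
  exact e3
end

section
/- Let p be a prime number and let τ ∈ S_p act on CO_p. Then the number of cyclic orders x ∈ CO_p with τ • x = x equals (p−1)! if τ is the identity, equals p−1 if τ is a p-cycle, and equals 0 otherwise. -/
theorem rot_order (p : ℕ) (hp : p.Prime) : orderOf (finRotate p) = p := by
  obtain ⟨n, rfl⟩ : ∃ n, p = n + 2 := ⟨p - 2, by have := hp.two_le; omega⟩
  rw [isCycle_finRotate.orderOf, support_finRotate]
  simp

theorem rot_mem (p : ℕ) (hp : p.Prime) (h : Equiv.Perm (Fin p))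
    (hm : h ∈ Subgroup.zpowers (finRotate p)) (h1 : h ≠ 1) :
    h.IsCycle ∧ h.support.card = p := by
  have hd : orderOf h ∣ p := by
    have := orderOf_dvd_of_mem_zpowers hm
    rwa [rot_order p hp] at this
  have ho : orderOf h = p := by
    rcases (Nat.dvd_prime hp).1 hd with h2 | h2
    · exact absurd (orderOf_eq_one_iff.1 h2) h1
    · exact h2
  have hc : h.IsCycle := Equiv.Perm.isCycle_of_prime_order'' (by simpa using hp) (by simpa using ho)
  exact ⟨hc, by rw [← hc.orderOf, ho]⟩

theorem comm_mem (p : ℕ) (hp : p.Prime) (h k : Equiv.Perm (Fin p))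
    (hc : h.IsCycle) (hs : h.support.card = p) (hk : Commute k h) :
    k ∈ Subgroup.zpowers h := by
  have hu : h.support = Finset.univ := by
    rw [← Finset.card_eq_iff_eq_univ]; simpa using hs
  have hne : ∀ x, h x ≠ x := fun x => by
    rw [← Equiv.Perm.mem_support, hu]; simp
  let z : Fin p := ⟨0, hp.pos⟩
  obtain ⟨i, hi⟩ := hc.exists_zpow_eq (hne z) (hne (k z))
  refine ⟨i, ?_⟩
  ext1 x
  obtain ⟨j, rfl⟩ := hc.exists_zpow_eq (hne z) (hne x)
  have e1 := congrArg (fun f : Equiv.Perm (Fin p) => f z) (hk.zpow_right j).eq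
  have e2 := congrArg (fun f : Equiv.Perm (Fin p) => f z) ((Commute.refl h).zpow_zpow i j).eq
  simp only [Equiv.Perm.mul_apply] at e1 e2
  simp only [e1, e2, hi]

theorem fix_iff (p : ℕ) (τ g : Equiv.Perm (Fin p)) :
    τ • (QuotientGroup.mk g : CO p) = QuotientGroup.mk g ↔
      g⁻¹ * τ * g ∈ Subgroup.zpowers (finRotate p) := by
  rw [eq_comm, MulAction.Quotient.smul_mk, QuotientGroup.eq, smul_eq_mul, mul_assoc]

theorem stmt_2 (p : ℕ) (hp : p.Prime) (τ : Equiv.Perm (Fin p)) :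
    (τ = 1 → Nat.card {x : CO p // τ • x = x} = (p - 1).factorial) ∧
    (τ.IsCycle ∧ τ.support.card = p → Nat.card {x : CO p // τ • x = x} = p - 1) ∧
    (τ ≠ 1 → ¬(τ.IsCycle ∧ τ.support.card = p) → Nat.card {x : CO p // τ • x = x} = 0) := by
  have hH : Nat.card (Subgroup.zpowers (finRotate p)) = p := by
    rw [Nat.card_zpowers, rot_order p hp]
  refine ⟨?_, ?_, ?_⟩
  · rintro rfl
    have e : Nat.card {x : CO p // (1 : Equiv.Perm (Fin p)) • x = x} = Nat.card (CO p) :=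
      Nat.card_congr (Equiv.subtypeUnivEquiv (fun x => one_smul _ x))
    rw [e]
    have h := Subgroup.card_eq_card_quotient_mul_card_subgroup (Subgroup.zpowers (finRotate p))
    rw [hH, Nat.card_perm, Nat.card_fin, ← Nat.mul_factorial_pred hp.ne_zero, mul_comm] at h
    exact (Nat.eq_of_mul_eq_mul_right hp.pos h).symm
  · rintro ⟨hc, hs⟩
    have hτ1 : τ ≠ 1 := hc.ne_one
    have hconj : ∀ h : {h : Subgroup.zpowers (finRotate p) // h ≠ 1},
        ∃ g : Equiv.Perm (Fin p), g⁻¹ * τ * g = h.1.1 := by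
      rintro ⟨⟨h, hm⟩, h1⟩
      have h1' : h ≠ 1 := fun e => h1 (Subtype.ext e)
      obtain ⟨hc', hs'⟩ := rot_mem p hp h hm h1'
      obtain ⟨c, hcc⟩ := isConj_iff.1 (hc.isConj hc' (hs.trans hs'.symm))
      exact ⟨c⁻¹, by simpa using hcc⟩
    choose G hG using hconj
    let F : {h : Subgroup.zpowers (finRotate p) // h ≠ 1} → {x : CO p // τ • x = x} :=
      fun h => ⟨QuotientGroup.mk (G h), (fix_iff p τ _).2 (by rw [hG]; exact h.1.2)⟩
    have hF : Function.Bijective F := by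
      constructor
      · intro a b hab
        have hab' : (QuotientGroup.mk (G a) : CO p) = QuotientGroup.mk (G b) :=
          congrArg Subtype.val hab
        rw [QuotientGroup.eq] at hab'
        have hcm := Subgroup.mul_comm_of_mem_isMulCommutative _ hab' a.1.2
        apply Subtype.ext
        apply Subtype.ext
        rw [← hG a] at hcm ⊢
        rw [← hG b]
        have : (G b)⁻¹ * τ * G b = ((G a)⁻¹ * G b)⁻¹ * (((G a)⁻¹ * τ * G a) * ((G a)⁻¹ * G b)) := by
          group
        rw [this, ← hcm]
        group
      · rintro ⟨x, hx⟩
        induction x using QuotientGroup.induction_on with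
        | H g =>
          have hm := (fix_iff p τ g).1 hx
          have h1 : g⁻¹ * τ * g ≠ 1 := by
            intro e
            apply hτ1
            have : τ = g * (g⁻¹ * τ * g) * g⁻¹ := by group
            rw [this, e]; simp
          refine ⟨⟨⟨_, hm⟩, fun e => h1 (congrArg Subtype.val e)⟩, Subtype.ext ?_⟩
          have hg := hG ⟨⟨_, hm⟩, fun e => h1 (congrArg Subtype.val e)⟩
          refine QuotientGroup.eq.2 ?_
          generalize G _ = g' at hg ⊢
          obtain ⟨hc', hs'⟩ := rot_mem p hp _ hm h1
          have hk : Commute (g'⁻¹ * g) (g⁻¹ * τ * g) := by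
            change (g'⁻¹ * g) * (g⁻¹ * τ * g) = (g⁻¹ * τ * g) * (g'⁻¹ * g)
            have hg2 : g'⁻¹ * τ * g' = g⁻¹ * τ * g := hg
            conv_rhs => rw [← hg2]
            group
          exact (Subgroup.zpowers_le.2 hm) (comm_mem p hp _ _ hc' hs' hk)
    rw [← Nat.card_eq_of_bijective F hF]
    classical
    rw [Nat.card_eq_fintype_card, Fintype.card_subtype_compl, Fintype.card_subtype_eq,
      ← Nat.card_eq_fintype_card, hH]
  · intro h1 hn
    rw [Nat.card_eq_zero]
    left
    constructor
    rintro ⟨x, hx⟩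
    induction x using QuotientGroup.induction_on with
    | H g =>
      have hm := (fix_iff p τ g).1 hx
      have e : g⁻¹ * τ * g = g⁻¹ * τ * g⁻¹⁻¹ := by simp
      have h2 : g⁻¹ * τ * g ≠ 1 := by
        intro e
        apply h1
        have : τ = g * (g⁻¹ * τ * g) * g⁻¹ := by group
        rw [this, e]; simp
      obtain ⟨hc', hs'⟩ := rot_mem p hp _ hm h2
      apply hn
      have e3 : τ = g * (g⁻¹ * τ * g) * g⁻¹ := by group
      rw [e3]
      exact ⟨hc'.conj, by rw [Equiv.Perm.card_support_conj, hs']⟩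
end

section
/- Let s : CO_4 × CO_4 → ℚ be neutral. Then there exist a, b, c ∈ ℚ such that for all g, h ∈ S_4: s(gH, hH) = a if hH = gH; s(gH, hH) = b if hH = (gρ)H (i.e., hH is the reversal of gH); and s(gH, hH) = c in all other cases. -/
theorem co4_key : ∀ k : Equiv.Perm (Fin 4),
    (∃ i : Fin 4, k = finRotate 4 ^ (i : ℕ)) ∨
    (∃ i : Fin 4, k = Fin.revPerm * finRotate 4 ^ (i : ℕ)) ∨
    (∃ i j : Fin 4, k = finRotate 4 ^ (i : ℕ) * Equiv.swap 0 1 * finRotate 4 ^ (j : ℕ)) := by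
  decide +kernel

theorem co4_mk (g : Equiv.Perm (Fin 4)) (i : ℕ) :
    (QuotientGroup.mk (g * finRotate 4 ^ i) : CO 4) = QuotientGroup.mk g :=
  QuotientGroup.mk_mul_of_mem g (Subgroup.npow_mem_zpowers _ i)

theorem stmt_5 (s : CO 4 → CO 4 → ℚ)
    (hs : ∀ (σ : Equiv.Perm (Fin 4)) (x y : CO 4), s (σ • x) (σ • y) = s x y) :
    ∃ a b c : ℚ, ∀ g h : Equiv.Perm (Fin 4),
      ((QuotientGroup.mk h : CO 4) = QuotientGroup.mk g →
        s (QuotientGroup.mk g) (QuotientGroup.mk h) = a) ∧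
      ((QuotientGroup.mk h : CO 4) = QuotientGroup.mk (g * Fin.revPerm) →
        s (QuotientGroup.mk g) (QuotientGroup.mk h) = b) ∧
      ((QuotientGroup.mk h : CO 4) ≠ QuotientGroup.mk g →
        (QuotientGroup.mk h : CO 4) ≠ QuotientGroup.mk (g * Fin.revPerm) →
        s (QuotientGroup.mk g) (QuotientGroup.mk h) = c) := by
  have key : ∀ (g k : Equiv.Perm (Fin 4)),
      s (QuotientGroup.mk g) (QuotientGroup.mk (g * k)) =
        s (QuotientGroup.mk 1) (QuotientGroup.mk k) := by
    intro g k
    have := hs g (QuotientGroup.mk 1) (QuotientGroup.mk k)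
    rw [← this, MulAction.Quotient.smul_mk, MulAction.Quotient.smul_mk, smul_eq_mul, smul_eq_mul,
      mul_one]
  refine ⟨s (QuotientGroup.mk 1) (QuotientGroup.mk 1),
    s (QuotientGroup.mk 1) (QuotientGroup.mk Fin.revPerm),
    s (QuotientGroup.mk 1) (QuotientGroup.mk (Equiv.swap 0 1)), fun g h => ⟨?_, ?_, ?_⟩⟩
  · intro e
    rw [e]
    simpa using key g 1
  · intro e
    rw [e, key]
  · intro h1 h2
    obtain ⟨k, rfl⟩ : ∃ k, h = g * k := ⟨g⁻¹ * h, by group⟩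
    rcases co4_key k with ⟨i, rfl⟩ | ⟨i, rfl⟩ | ⟨i, j, rfl⟩
    · exact absurd (co4_mk _ _) h1
    · rw [← mul_assoc] at h2
      exact absurd (co4_mk _ _) h2
    · rw [← mul_assoc, co4_mk, ← mul_assoc, ← co4_mk g i, key]
end

section
/- Let s : CO_4 × CO_4 → ℚ be neutral. Then there exist t, u, v ∈ ℚ such that for every p : CO_4 → ℚ and every decomposition p = p₁ + p₂ + p₃ with p₁ constant, p₂ satisfying p₂(rev(x)) = p₂(x) for all x and Σ_{x ∈ CO_4} p₂(x) = 0, and p₃ satisfying p₃(rev(x)) = −p₃(x) for all x, one has Mp = t·p₁ + u·p₂ + v·p₃. -/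
noncomputable instance (n : ℕ) : Fintype (CO n) := Fintype.ofFinite _

/-- The reversal of a cyclic order `gH` is `(g * ρ)H`, where `ρ : i ↦ n - 1 - i`. -/
def rev : CO 4 → CO 4 := Quotient.map' (· * Fin.revPerm) (by
  intro g g' hgg'
  rw [QuotientGroup.leftRel_apply] at hgg' ⊢
  obtain ⟨k, hk⟩ := hgg'
  refine ⟨-k, ?_⟩
  simp only at hk ⊢
  have key : (Fin.revPerm : Equiv.Perm (Fin 4))⁻¹ * finRotate 4 * Fin.revPerm
      = (finRotate 4)⁻¹ := by decide
  have h1 : (g * Fin.revPerm)⁻¹ * (g' * Fin.revPerm)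
      = Fin.revPerm⁻¹ * (g⁻¹ * g') * Fin.revPerm := by group
  rw [h1, ← hk, zpow_neg, ← inv_zpow, ← key]
  have h2 : (Fin.revPerm : Equiv.Perm (Fin 4)) = Fin.revPerm⁻¹⁻¹ := (inv_inv _).symm
  calc (Fin.revPerm⁻¹ * finRotate 4 * Fin.revPerm : Equiv.Perm (Fin 4)) ^ k
      = (Fin.revPerm⁻¹ * finRotate 4 * Fin.revPerm⁻¹⁻¹ : Equiv.Perm (Fin 4)) ^ k := by
        rw [← h2]
    _ = Fin.revPerm⁻¹ * finRotate 4 ^ k * Fin.revPerm⁻¹⁻¹ := conj_zpow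
    _ = Fin.revPerm⁻¹ * finRotate 4 ^ k * Fin.revPerm := by rw [← h2])


def tauAux : Equiv.Perm (Fin 4) := Equiv.swap 0 1

theorem cover_aux : ∀ g : Equiv.Perm (Fin 4), (∃ j : Fin 4, g = finRotate 4 ^ (j : ℕ)) ∨
    (∃ j : Fin 4, g = Fin.revPerm * finRotate 4 ^ (j : ℕ)) ∨
    (∃ i j : Fin 4, g = finRotate 4 ^ (i : ℕ) * tauAux * finRotate 4 ^ (j : ℕ)) := by
  decide +kernel

theorem mk_mul_aux (g : Equiv.Perm (Fin 4)) (j : ℕ) :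
    (QuotientGroup.mk (g * finRotate 4 ^ j) : CO 4) = QuotientGroup.mk g := by
  rw [eq_comm, QuotientGroup.eq]
  refine ⟨j, ?_⟩
  simp

theorem rev_mk_aux (g : Equiv.Perm (Fin 4)) :
    rev (QuotientGroup.mk g) = QuotientGroup.mk (g * Fin.revPerm) := rfl

theorem smul_mk_aux (k g : Equiv.Perm (Fin 4)) :
    k • (QuotientGroup.mk g : CO 4) = QuotientGroup.mk (k * g) := rfl

theorem rev_rev_aux (x : CO 4) : rev (rev x) = x := by
  induction x using QuotientGroup.induction_on with
  | H g =>
    rw [rev_mk_aux, rev_mk_aux, mul_assoc]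
    have : (Fin.revPerm * Fin.revPerm : Equiv.Perm (Fin 4)) = 1 := by decide
    rw [this, mul_one]

theorem rev_ne_aux (x : CO 4) : rev x ≠ x := by
  induction x using QuotientGroup.induction_on with
  | H g =>
    rw [rev_mk_aux, Ne, eq_comm, QuotientGroup.eq, inv_mul_cancel_left]
    intro h
    obtain ⟨k, hk⟩ := h
    have h1 : Commute ((finRotate 4) ^ k) (finRotate 4) := (Commute.refl _).zpow_left k
    simp only at hk
    rw [hk] at h1
    revert h1
    unfold Commute SemiconjBy
    decide

theorem stmt_10 (s : CO 4 → CO 4 → ℚ)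
    (hs : ∀ (σ : Equiv.Perm (Fin 4)) (x y : CO 4), s (σ • x) (σ • y) = s x y) :
    ∃ t u v : ℚ, ∀ p p₁ p₂ p₃ : CO 4 → ℚ,
      (∀ x : CO 4, p x = p₁ x + p₂ x + p₃ x) →
      (∃ q : ℚ, ∀ x : CO 4, p₁ x = q) →
      (∀ x : CO 4, p₂ (rev x) = p₂ x) → (∑ x : CO 4, p₂ x = 0) →
      (∀ x : CO 4, p₃ (rev x) = - p₃ x) →
      ∀ h : CO 4, (∑ x : CO 4, p x * s x h) = t * p₁ h + u * p₂ h + v * p₃ h := by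
  classical
  let e : CO 4 := QuotientGroup.mk 1
  obtain ⟨a, ha⟩ : ∃ a, a = s e e := ⟨_, rfl⟩
  obtain ⟨b, hb⟩ : ∃ b, b = s (rev e) e := ⟨_, rfl⟩
  obtain ⟨d, hd⟩ : ∃ d, d = s (QuotientGroup.mk tauAux) e := ⟨_, rfl⟩
  have key : ∀ x h : CO 4, (x = h ∧ s x h = a) ∨ (x = rev h ∧ s x h = b) ∨ s x h = d := by
    intro x h
    induction x using QuotientGroup.induction_on with
    | H g =>
    induction h using QuotientGroup.induction_on with
    | H k =>
    have hk : (QuotientGroup.mk k : CO 4) = k • e := by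
      rw [smul_mk_aux, mul_one]
    have hg : (QuotientGroup.mk g : CO 4) = k • QuotientGroup.mk (k⁻¹ * g) := by
      rw [smul_mk_aux, mul_inv_cancel_left]
    rcases cover_aux (k⁻¹ * g) with ⟨j, hj⟩ | ⟨j, hj⟩ | ⟨i, j, hj⟩
    · left
      have h0 : (QuotientGroup.mk (k⁻¹ * g) : CO 4) = e := by
        rw [hj, ← one_mul (finRotate 4 ^ (j : ℕ)), mk_mul_aux]
      rw [hg, hk, h0, hs]
      exact ⟨rfl, ha.symm⟩
    · right; left
      have h0 : (QuotientGroup.mk (k⁻¹ * g) : CO 4) = rev e := by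
        rw [hj, mk_mul_aux, rev_mk_aux, one_mul]
      refine ⟨?_, ?_⟩
      · rw [hg, h0, rev_mk_aux, rev_mk_aux, smul_mk_aux, one_mul]
      · rw [hg, hk, h0, hs, hb]
    · right; right
      rw [hg, hk, hs, hj, mk_mul_aux, hd, ← smul_mk_aux]
      have h0 : e = finRotate 4 ^ (i : ℕ) • e := by
        rw [smul_mk_aux, mul_one, ← one_mul (finRotate 4 ^ (i : ℕ)), mk_mul_aux]
      conv_lhs => rw [h0]
      rw [hs]
  have ka : ∀ h, s h h = a := by
    intro h
    induction h using QuotientGroup.induction_on with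
    | H k =>
    have hk : (QuotientGroup.mk k : CO 4) = k • e := by
      rw [smul_mk_aux, mul_one]
    rw [hk, hs, ha]
  have kb : ∀ h, s (rev h) h = b := by
    intro h
    induction h using QuotientGroup.induction_on with
    | H k =>
    have hk : (QuotientGroup.mk k : CO 4) = k • e := by
      rw [smul_mk_aux, mul_one]
    have hk' : rev (QuotientGroup.mk k : CO 4) = k • rev e := by
      rw [rev_mk_aux, rev_mk_aux, smul_mk_aux, one_mul]
    rw [hk', hk, hs, hb]
  have form : ∀ x h : CO 4, s x h =
      d + (if x = h then a - d else 0) + (if x = rev h then b - d else 0) := by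
    intro x h
    by_cases h1 : x = h
    · subst h1
      rw [if_pos rfl, if_neg (fun h => rev_ne_aux x h.symm), ka]; ring
    · by_cases h2 : x = rev h
      · subst h2
        rw [if_neg h1, if_pos rfl, kb]; ring
      · rw [if_neg h1, if_neg h2]
        rcases key x h with h3 | h3 | h3
        · exact absurd h3.1 h1
        · exact absurd h3.1 h2
        · rw [h3]; ring
  refine ⟨(Fintype.card (CO 4) : ℚ) * d + (a - d) + (b - d), (a - d) + (b - d), a - b, ?_⟩
  rintro p p₁ p₂ p₃ hp ⟨q, hq⟩ h2 h2s h3 h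
  have h3s : ∑ x : CO 4, p₃ x = 0 := by
    have := Equiv.sum_comp (⟨rev, rev, rev_rev_aux, rev_rev_aux⟩ : CO 4 ≃ CO 4) p₃
    simp only [Equiv.coe_fn_mk, h3, Finset.sum_neg_distrib] at this
    linarith
  have hps : ∑ x : CO 4, p x = Fintype.card (CO 4) * q := by
    simp only [hp, Finset.sum_add_distrib, h2s, h3s, hq, Finset.sum_const, Finset.card_univ,
      nsmul_eq_mul, add_zero]
  simp only [form, mul_add, Finset.sum_add_distrib, mul_ite, mul_zero, Finset.sum_ite_eq',
    Finset.mem_univ, if_true, ← Finset.sum_mul, hps]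
  rw [hp h, hp (rev h), h2, h3, hq, hq]
  ring
end

section
/- The diagonal action of S_5 on CO_5 × CO_5, given by σ • (x, y) = (σ • x, σ • y), has exactly 8 orbits. (Hence any neutral points-based rule on CO_5 where ballots are a single cyclic order depends on eight parameters.) -/
open Equiv in
/-- Double coset representatives, as products of transpositions. -/
def rep5 : Fin 8 → Perm (Fin 5) :=
  ![1, swap 3 4, swap 2 3 * swap 3 4, swap 2 4, swap 1 2 * swap 3 4,
    swap 1 2 * swap 2 4 * swap 4 3, swap 1 3 * swap 3 4 * swap 4 2, swap 1 4 * swap 2 3]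

theorem mem_rot5 (x : Equiv.Perm (Fin 5)) :
    x ∈ Subgroup.zpowers (finRotate 5) ↔ ∃ k : Fin 5, x = finRotate 5 ^ (k : ℕ) := by
  constructor
  · rintro ⟨m, rfl⟩
    have h5 : finRotate 5 ^ (5 : ℤ) = 1 := by decide +kernel
    refine ⟨⟨(m % 5).toNat, by omega⟩, ?_⟩
    have h : ((m % 5).toNat : ℤ) = m % 5 := by omega
    rw [← zpow_natCast]
    simp only [h]
    conv_lhs => rw [← Int.emod_add_mul_ediv m 5]
    simp [zpow_add, zpow_mul, h5]
  · rintro ⟨k, rfl⟩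
    exact Subgroup.npow_mem_zpowers _ _

theorem rep5_inj : ∀ i j : Fin 8, ∀ k l : Fin 5,
    (finRotate 5 ^ (k : ℕ) * rep5 j)⁻¹ * rep5 i = finRotate 5 ^ (l : ℕ) → i = j := by
  decide +kernel

theorem rep5_surj : ∀ g : Equiv.Perm (Fin 5), ∃ i : Fin 8, ∃ k l : Fin 5,
    (finRotate 5 ^ (k : ℕ) * g)⁻¹ * rep5 i = finRotate 5 ^ (l : ℕ) := by
  decide +kernel

theorem stmt_13 :
    Nat.card (MulAction.orbitRel.Quotient (Equiv.Perm (Fin 5)) (CO 5 × CO 5)) = 8 := by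
  let f : Fin 8 → MulAction.orbitRel.Quotient (Equiv.Perm (Fin 5)) (CO 5 × CO 5) :=
    fun i => Quotient.mk'' (((1 : Equiv.Perm (Fin 5)) : CO 5), ((rep5 i : Equiv.Perm (Fin 5)) : CO 5))
  have hf : Function.Bijective f := by
    constructor
    · intro i j h
      have h' := Quotient.eq''.mp h
      rw [MulAction.orbitRel_apply] at h'
      obtain ⟨s, hs⟩ := h'
      obtain ⟨h1, h2⟩ := Prod.mk.inj hs
      have h1' : ((s * 1 : Equiv.Perm (Fin 5)) : CO 5) = ((1 : Equiv.Perm (Fin 5)) : CO 5) := h1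
      have h2' : ((s * rep5 j : Equiv.Perm (Fin 5)) : CO 5) = (rep5 i : CO 5) := h2
      rw [eq_comm, QuotientGroup.eq, mem_rot5] at h1'
      rw [QuotientGroup.eq, mem_rot5] at h2'
      obtain ⟨k, hk⟩ := h1'
      obtain ⟨l, hl⟩ := h2'
      have hk' : s = finRotate 5 ^ (k : ℕ) := by simpa using hk
      subst hk'
      exact rep5_inj i j k l hl
    · intro q
      induction q using Quotient.inductionOn' with
      | h p =>
      obtain ⟨a, b⟩ := p
      induction a using QuotientGroup.induction_on with
      | H a =>
      induction b using QuotientGroup.induction_on with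
      | H b =>
      obtain ⟨i, k, l, h⟩ := rep5_surj (a⁻¹ * b)
      refine ⟨i, Quotient.eq''.mpr ?_⟩
      rw [MulAction.orbitRel_apply]
      refine ⟨finRotate 5 ^ (k : ℕ) * a⁻¹, Prod.ext ?_ ?_⟩
      · change ((finRotate 5 ^ (k : ℕ) * a⁻¹ * a : Equiv.Perm (Fin 5)) : CO 5) = ((1 : Equiv.Perm (Fin 5)) : CO 5)
        rw [eq_comm, QuotientGroup.eq, mem_rot5]
        exact ⟨k, by simp⟩
      · change ((finRotate 5 ^ (k : ℕ) * a⁻¹ * b : Equiv.Perm (Fin 5)) : CO 5) = (rep5 i : CO 5)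
        rw [QuotientGroup.eq, mem_rot5]
        exact ⟨l, by rw [← h, mul_assoc]⟩
  rw [← Nat.card_eq_of_bijective f hf]
  simp
end

section
/- The diagonal action of S_4 on CO_4 × CO_4, given by σ • (x, y) = (σ • x, σ • y), has exactly 3 orbits. (Hence any neutral points-based rule on CO_4 where ballots are a single cyclic order depends on three parameters.) -/
namespace COaux

abbrev G := Equiv.Perm (Fin 4)
abbrev c : G := finRotate 4

/-- classification of double cosets -/
def f (g : G) : Fin 3 :=
  if g * c = c * g then 0 else if c * g * c = g then 1 else 2

/-- representatives -/
def r (i : Fin 3) : G :=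
  if i = 0 then 1 else if i = 1 then Equiv.swap 0 2 else Equiv.swap 0 1

theorem f_left (g : G) : f (c * g) = f g := by
  have h1 : c * g * c = c * (c * g) ↔ g * c = c * g := by
    rw [mul_assoc, mul_left_cancel_iff]
  have h2 : c * (c * g) * c = c * g ↔ c * g * c = g := by
    rw [mul_assoc, mul_left_cancel_iff]
  simp only [f, h1, h2]

theorem f_right (g : G) : f (g * c) = f g := by
  have h1 : g * c * c = c * (g * c) ↔ g * c = c * g := by
    rw [← mul_assoc c, mul_right_cancel_iff]
  have h2 : c * (g * c) * c = g * c ↔ c * g * c = g := by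
    rw [← mul_assoc c, mul_right_cancel_iff]
  simp only [f, h1, h2]

theorem f_left_z (h : G) (hh : h ∈ Subgroup.zpowers c) : ∀ g, f (h * g) = f g := by
  rw [Subgroup.zpowers_eq_closure] at hh
  induction hh using Subgroup.closure_induction with
  | mem x hx => rw [Set.mem_singleton_iff] at hx; subst hx; exact f_left
  | one => simp
  | mul x y _ _ hx hy => intro g; rw [mul_assoc, hx, hy]
  | inv x _ hx => intro g; rw [← hx (x⁻¹ * g), mul_inv_cancel_left]

theorem f_right_z (h : G) (hh : h ∈ Subgroup.zpowers c) : ∀ g, f (g * h) = f g := by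
  rw [Subgroup.zpowers_eq_closure] at hh
  induction hh using Subgroup.closure_induction with
  | mem x hx => rw [Set.mem_singleton_iff] at hx; subst hx; exact f_right
  | one => simp
  | mul x y _ _ hx hy => intro g; rw [← mul_assoc, hy, hx]
  | inv x _ hx => intro g; rw [← hx (g * x⁻¹), inv_mul_cancel_right]

theorem f_r : ∀ i, f (r i) = i := by decide +kernel

theorem rep : ∀ g : G, ∃ i j : Fin 4, c ^ (i : ℕ) * r (f g) * c ^ (j : ℕ) = g := by
  decide +kernel

/-- the invariant on pairs -/
def F (p : CO 4 × CO 4) : Fin 3 :=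
  Quotient.liftOn₂' p.1 p.2 (fun a b => f (a⁻¹ * b)) (by
    intro a b a' b' h h'
    rw [QuotientGroup.leftRel_apply] at h h'
    have e : a'⁻¹ * b' = (a⁻¹ * a')⁻¹ * ((a⁻¹ * b) * (b⁻¹ * b')) := by group
    show f (a⁻¹ * b) = f (a'⁻¹ * b')
    rw [e, f_left_z _ (inv_mem h), f_right_z _ h'])

theorem F_mk (a b : G) : F ((a : CO 4), (b : CO 4)) = f (a⁻¹ * b) := rfl

theorem orbit_rep (a b : G) : ∃ s : G,
    s • (((1 : G) : CO 4), ((r (f (a⁻¹ * b)) : G) : CO 4)) = ((a : CO 4), (b : CO 4)) := by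
  obtain ⟨i, j, h⟩ := rep (a⁻¹ * b)
  refine ⟨a * c ^ (i : ℕ), ?_⟩
  rw [Prod.smul_mk, Prod.mk.injEq]
  constructor
  · refine QuotientGroup.eq.2 ?_
    have : (a * c ^ (i : ℕ) * 1)⁻¹ * a = (c ^ (i : ℕ))⁻¹ := by group
    simp only [smul_eq_mul, this]
    exact inv_mem (pow_mem (Subgroup.mem_zpowers _) _)
  · refine QuotientGroup.eq.2 ?_
    have : (a * c ^ (i : ℕ) * r (f (a⁻¹ * b)))⁻¹ * b = c ^ (j : ℕ) := by
      rw [inv_mul_eq_iff_eq_mul, mul_assoc, mul_assoc, ← mul_assoc (c ^ (i : ℕ)), h,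
        mul_inv_cancel_left]
    simp only [smul_eq_mul, this]
    exact pow_mem (Subgroup.mem_zpowers _) _

theorem F_iff (p q : CO 4 × CO 4) : MulAction.orbitRel G (CO 4 × CO 4) p q ↔ F p = F q := by
  obtain ⟨x, y⟩ := p
  obtain ⟨x', y'⟩ := q
  induction x using QuotientGroup.induction_on with | _ a
  induction y using QuotientGroup.induction_on with | _ b
  induction x' using QuotientGroup.induction_on with | _ a'
  induction y' using QuotientGroup.induction_on with | _ b'
  rw [MulAction.orbitRel_apply]
  constructor
  · rintro ⟨s, hs⟩
    rw [← hs]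
    show f ((s * a')⁻¹ * (s * b')) = f (a'⁻¹ * b')
    congr 1
    group
  · intro h
    rw [F_mk, F_mk] at h
    obtain ⟨s, hs⟩ := orbit_rep a b
    obtain ⟨t, ht⟩ := orbit_rep a' b'
    rw [h] at hs
    refine ⟨s * t⁻¹, ?_⟩
    show (s * t⁻¹) • _ = _
    rw [← hs, ← ht, smul_smul, inv_mul_cancel_right]

/-- the induced map on orbits -/
def Q : MulAction.orbitRel.Quotient G (CO 4 × CO 4) → Fin 3 :=
  Quotient.lift F (fun p q h => (F_iff p q).1 h)

theorem Q_bij : Function.Bijective Q := by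
  constructor
  · intro u v
    induction u using Quotient.inductionOn with | _ p
    induction v using Quotient.inductionOn with | _ q
    intro h
    exact Quotient.sound ((F_iff p q).2 h)
  · intro i
    refine ⟨Quotient.mk _ (((1 : G) : CO 4), ((r i : G) : CO 4)), ?_⟩
    show f (1⁻¹ * r i) = i
    rw [inv_one, one_mul, f_r]

end COaux

theorem stmt_14 :
    Nat.card (MulAction.orbitRel.Quotient (Equiv.Perm (Fin 4)) (CO 4 × CO 4)) = 3 := by
  rw [Nat.card_congr (Equiv.ofBijective COaux.Q COaux.Q_bij), Nat.card_fin]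
end

section
/- Let s : CO_5 × CO_5 → ℚ be neutral. Then for every h ∈ S_5, Σ_{g ∈ S_5} sgn(g)·s(gH, hH) = sgn(h) · Σ_{g ∈ S_5} sgn(g)·s(gH, H), where sgn : S_5 → {±1} ⊆ ℚ is the sign homomorphism. (That is, the sign function, which is well-defined on CO_5 since the 5-cycle c is even, spans an eigenspace of every neutral scoring rule on CO_5.) -/
theorem stmt_16 (s : CO 5 → CO 5 → ℚ)
    (hs : ∀ (σ : Equiv.Perm (Fin 5)) (x y : CO 5), s (σ • x) (σ • y) = s x y)
    (h : Equiv.Perm (Fin 5)) :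
    ∑ g : Equiv.Perm (Fin 5),
        ((Equiv.Perm.sign g : ℤ) : ℚ) * s (QuotientGroup.mk g) (QuotientGroup.mk h)
      = ((Equiv.Perm.sign h : ℤ) : ℚ) *
        ∑ g : Equiv.Perm (Fin 5),
          ((Equiv.Perm.sign g : ℤ) : ℚ) * s (QuotientGroup.mk g) (QuotientGroup.mk 1) := by
  rw [← Equiv.sum_comp (Equiv.mulLeft h), Finset.mul_sum]
  refine Finset.sum_congr rfl fun g _ => ?_
  have key := hs h (QuotientGroup.mk g) (QuotientGroup.mk 1)
  rw [MulAction.Quotient.smul_mk, MulAction.Quotient.smul_mk, smul_eq_mul, smul_eq_mul,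
    mul_one] at key
  rw [Equiv.coe_mulLeft, key, Equiv.Perm.sign_mul]
  push_cast
  ring
end

section
/- Fix x ∈ ℚ and a cyclic order y₀ ∈ CO_4 with successor permutation τ₀. Define a profile p on ROLO ballots by: p(b) = 1 if b = (a, τ₀⁻¹(a), τ₀(a)) for some a ∈ Fin 4 (the four ballots fully matching y₀); p(b) = −1 if b = (a, τ₀(a), τ₀⁻¹(a)) for some a ∈ Fin 4 (the four ballots fully matching the reversal of y₀); and p(b) = 0 otherwise. Then for every cyclic order y ∈ CO_4, the total score Σ_b p(b)·s_x(b, y) equals 4x if y = y₀, equals −4x if y is the reversal of y₀, and equals 0 otherwise. -/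
/-- A ROLO ballot: a triple `(a, r, l)` of pairwise distinct elements of `Fin 4`
(`r` immediately to the right of `a`, `l` immediately to the left of `a`). -/
abbrev Ballot :=
  {t : Fin 4 × Fin 4 × Fin 4 // t.1 ≠ t.2.1 ∧ t.1 ≠ t.2.2 ∧ t.2.1 ≠ t.2.2}

/-- The successor permutation of a cyclic order `gH` is `g * c * g⁻¹`. -/
def succPerm (x : CO 4) : Equiv.Perm (Fin 4) :=
  Quotient.liftOn' x (fun g => g * finRotate 4 * g⁻¹) (by
    intro g g' hgg'
    rw [QuotientGroup.leftRel_apply] at hgg'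
    obtain ⟨k, hk⟩ := hgg'
    simp only at hk ⊢
    have h1 : g' = g * finRotate 4 ^ k := by rw [hk, mul_inv_cancel_left]
    subst h1
    have hc : Commute (finRotate 4 ^ k) (finRotate 4) :=
      (Commute.refl (finRotate 4)).zpow_left k
    have key : (finRotate 4 ^ k) * finRotate 4 * (finRotate 4 ^ k)⁻¹ = finRotate 4 := by
      rw [hc.eq, mul_inv_cancel_right]
    calc g * finRotate 4 * g⁻¹
        = g * ((finRotate 4 ^ k) * finRotate 4 * (finRotate 4 ^ k)⁻¹) * g⁻¹ := by rw [key]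
      _ = g * finRotate 4 ^ k * finRotate 4 * (g * finRotate 4 ^ k)⁻¹ := by group)

/-- The ROLO(x,1) score of a ballot `(a, r, l)` against a cyclic order with
successor permutation `τ`: `x` points if both `τ a = l` and `τ r = a` hold,
`1` point if exactly one of them holds, and `0` points otherwise. -/
def score (x : ℚ) (τ : Equiv.Perm (Fin 4)) (t : Fin 4 × Fin 4 × Fin 4) : ℚ :=
  if τ t.1 = t.2.2 ∧ τ t.2.1 = t.1 then x
  else if τ t.1 = t.2.2 ∨ τ t.2.1 = t.1 then 1
  else 0

def PP (τ : Equiv.Perm (Fin 4)) (t : Fin 4 × Fin 4 × Fin 4) : ℤ :=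
  if τ t.2.1 = t.1 ∧ τ t.1 = t.2.2 then 1
  else if τ t.2.2 = t.1 ∧ τ t.1 = t.2.1 then -1 else 0

def SA (τ : Equiv.Perm (Fin 4)) (t : Fin 4 × Fin 4 × Fin 4) : ℤ :=
  if τ t.1 = t.2.2 ∧ τ t.2.1 = t.1 then 1 else 0

def SB (τ : Equiv.Perm (Fin 4)) (t : Fin 4 × Fin 4 × Fin 4) : ℤ :=
  if τ t.1 = t.2.2 ∧ τ t.2.1 = t.1 then 0
  else if τ t.1 = t.2.2 ∨ τ t.2.1 = t.1 then 1 else 0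

def six : List (Equiv.Perm (Fin 4)) :=
  [⟨![1,2,3,0], ![3,0,1,2], by decide, by decide⟩,
   ⟨![3,0,1,2], ![1,2,3,0], by decide, by decide⟩,
   ⟨![1,3,0,2], ![2,0,3,1], by decide, by decide⟩,
   ⟨![2,0,3,1], ![1,3,0,2], by decide, by decide⟩,
   ⟨![2,3,1,0], ![3,2,0,1], by decide, by decide⟩,
   ⟨![3,2,0,1], ![2,3,1,0], by decide, by decide⟩]

lemma mem_six : ∀ g : Equiv.Perm (Fin 4), g * finRotate 4 * g⁻¹ ∈ six := by
  decide +kernel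

lemma cent : ∀ h : Equiv.Perm (Fin 4), h * finRotate 4 = finRotate 4 * h →
    h = finRotate 4 ^ 0 ∨ h = finRotate 4 ^ 1 ∨ h = finRotate 4 ^ 2 ∨ h = finRotate 4 ^ 3 := by
  decide +kernel

lemma ne_inv : ∀ τ ∈ six, ∀ a, τ a ≠ τ⁻¹ a := by decide +kernel

lemma counts : ∀ τ₀ ∈ six, ∀ τ ∈ six,
    (∑ b : Ballot, PP τ₀ b.1 * SA τ b.1 =
      if τ = τ₀ then 4 else if τ = τ₀⁻¹ then -4 else 0) ∧
    ∑ b : Ballot, PP τ₀ b.1 * SB τ b.1 = 0 := by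
  decide +kernel

lemma succ_mem (y : CO 4) : succPerm y ∈ six := by
  induction y using Quotient.inductionOn' with
  | h g => exact mem_six g

lemma succ_inj (y z : CO 4) (h : succPerm y = succPerm z) : y = z := by
  induction y using Quotient.inductionOn' with
  | h g =>
  induction z using Quotient.inductionOn' with
  | h k =>
  change g * finRotate 4 * g⁻¹ = k * finRotate 4 * k⁻¹ at h
  refine Quotient.sound' ?_
  rw [QuotientGroup.leftRel_apply]
  have h2 : (g⁻¹ * k) * finRotate 4 = finRotate 4 * (g⁻¹ * k) := by
    calc (g⁻¹ * k) * finRotate 4 = g⁻¹ * (k * finRotate 4 * k⁻¹) * k := by group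
      _ = g⁻¹ * (g * finRotate 4 * g⁻¹) * k := by rw [h]
      _ = _ := by group
  rcases cent _ h2 with h | h | h | h <;> rw [h] <;>
    exact Subgroup.npow_mem_zpowers _ _

lemma score_eq (x : ℚ) (τ : Equiv.Perm (Fin 4)) (t : Fin 4 × Fin 4 × Fin 4) :
    score x τ t = (SA τ t : ℚ) * x + (SB τ t : ℚ) := by
  unfold score SA SB
  split_ifs <;> simp

theorem stmt_18 (x : ℚ) (y₀ : CO 4) (p : Ballot → ℚ)
    (hp1 : ∀ b : Ballot,
      (∃ a : Fin 4, (b : Fin 4 × Fin 4 × Fin 4) = (a, (succPerm y₀)⁻¹ a, succPerm y₀ a)) →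
      p b = 1)
    (hp2 : ∀ b : Ballot,
      (∃ a : Fin 4, (b : Fin 4 × Fin 4 × Fin 4) = (a, succPerm y₀ a, (succPerm y₀)⁻¹ a)) →
      p b = -1)
    (hp0 : ∀ b : Ballot,
      (¬ ∃ a : Fin 4, (b : Fin 4 × Fin 4 × Fin 4) = (a, (succPerm y₀)⁻¹ a, succPerm y₀ a)) →
      (¬ ∃ a : Fin 4, (b : Fin 4 × Fin 4 × Fin 4) = (a, succPerm y₀ a, (succPerm y₀)⁻¹ a)) →
      p b = 0)
    (y : CO 4) :
    (y = y₀ →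
      ∑ b : Ballot, p b * score x (succPerm y) (b : Fin 4 × Fin 4 × Fin 4) = 4 * x) ∧
    (succPerm y = (succPerm y₀)⁻¹ →
      ∑ b : Ballot, p b * score x (succPerm y) (b : Fin 4 × Fin 4 × Fin 4) = -(4 * x)) ∧
    (y ≠ y₀ → succPerm y ≠ (succPerm y₀)⁻¹ →
      ∑ b : Ballot, p b * score x (succPerm y) (b : Fin 4 × Fin 4 × Fin 4) = 0) := by
  have hp : ∀ b : Ballot, p b = (PP (succPerm y₀) b.1 : ℚ) := by
    intro b
    have e1 : (∃ a : Fin 4, (b : Fin 4 × Fin 4 × Fin 4) =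
        (a, (succPerm y₀)⁻¹ a, succPerm y₀ a)) ↔
        (succPerm y₀ b.1.2.1 = b.1.1 ∧ succPerm y₀ b.1.1 = b.1.2.2) := by
      obtain ⟨⟨a, r, l⟩, hb⟩ := b
      simp only [Prod.mk.injEq, exists_eq_left', Equiv.Perm.eq_inv_iff_eq]
      simp [eq_comm]
    have e2 : (∃ a : Fin 4, (b : Fin 4 × Fin 4 × Fin 4) =
        (a, succPerm y₀ a, (succPerm y₀)⁻¹ a)) ↔
        (succPerm y₀ b.1.2.2 = b.1.1 ∧ succPerm y₀ b.1.1 = b.1.2.1) := by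
      obtain ⟨⟨a, r, l⟩, hb⟩ := b
      simp only [Prod.mk.injEq, exists_eq_left', Equiv.Perm.eq_inv_iff_eq]
      simp [eq_comm, and_comm]
    unfold PP
    split_ifs with h1 h2
    · simpa using hp1 b (e1.2 h1)
    · simpa using hp2 b (e2.2 h2)
    · simpa using hp0 b (fun h => h1 (e1.1 h)) (fun h => h2 (e2.1 h))
  obtain ⟨cA, cB⟩ := counts _ (succ_mem y₀) _ (succ_mem y)
  have key : ∑ b : Ballot, p b * score x (succPerm y) (b : Fin 4 × Fin 4 × Fin 4) =
      ((∑ b : Ballot, PP (succPerm y₀) b.1 * SA (succPerm y) b.1 : ℤ) : ℚ) * x +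
      ((∑ b : Ballot, PP (succPerm y₀) b.1 * SB (succPerm y) b.1 : ℤ) : ℚ) := by
    push_cast
    rw [Finset.sum_mul, ← Finset.sum_add_distrib]
    refine Finset.sum_congr rfl fun b _ => ?_
    rw [hp, score_eq]
    ring
  rw [key, cA, cB]
  refine ⟨?_, ?_, ?_⟩
  · rintro rfl
    simp
  · intro h
    have hne : succPerm y ≠ succPerm y₀ := by
      intro h'
      exact ne_inv _ (succ_mem y₀) 0 (by rw [← h, h'])
    rw [if_neg hne, if_pos h]
    push_cast
    ring
  · intro h1 h2
    rw [if_neg (fun h => h1 (succ_inj _ _ h)), if_neg h2]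
    simp
end
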